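/- arXiv:2405.15694 — 2 statements merged into one kernel-verified Lean document; each statement's English description precedes it below -/
import Mathlib

section
/- (Unitality is stable under deformation.) Let V be a finite-dimensional real vector space and let m be an associative algebra structure on V admitting a two-sided unit e ∈ V (i.e. m(e,x) = x = m(x,e) for all x ∈ V). Then there exists a neighborhood 𝒰 of m in the space of bilinear maps V × V → V such that every associative algebra structure m' ∈ 𝒰 admits a two-sided unit e' ∈ V, i.e. m'(e',x) = x = m'(x,e') for all x ∈ V. -/
/-!
Left and right multiplication by `e` in `m` are the identity, and invertibility is an open
condition on endomorphisms of `V`, so for `m'` near `m` left and right multiplication by `e` in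
`m'` are still bijective. In an associative algebra this forces a unit: solving `e * u = e` gives
`e * (u * x) = e * x`, hence `u * x = x`, so `u` is a left unit; symmetrically the solution of
`v * e = e` is a right unit, and a left unit and a right unit coincide.
-/

/-- Unitality is stable under deformation: if a finite-dimensional associative algebra
`(V,m)` has a two-sided unit, then every associative algebra structure `m'` near `m`
also has a two-sided unit. -/
theorem unitality_stable_under_deformation
    (V : Type*) [NormedAddCommGroup V] [NormedSpace ℝ V] [FiniteDimensional ℝ V]
    (m : V →L[ℝ] V →L[ℝ] V)
    (hassoc : ∀ x y z : V, m (m x y) z = m x (m y z))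
    (e : V) (he : ∀ x : V, m e x = x ∧ m x e = x) :
    ∃ 𝒰 ∈ nhds m, ∀ m' ∈ 𝒰,
      (∀ x y z : V, m' (m' x y) z = m' x (m' y z)) →
      ∃ e' : V, ∀ x : V, m' e' x = x ∧ m' x e' = x := by
  haveI : CompleteSpace V := FiniteDimensional.complete ℝ V
  have hL : Continuous fun m' : V →L[ℝ] V →L[ℝ] V => m' e := by fun_prop
  have hR : Continuous fun m' : V →L[ℝ] V →L[ℝ] V => m'.flip e :=
    ((ContinuousLinearMap.apply ℝ (V →L[ℝ] V) e).continuous).comp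
      (ContinuousLinearMap.flipₗᵢ ℝ V V V).continuous
  have hL1 : m e = 1 := by ext x; simpa using (he x).1
  have hR1 : m.flip e = 1 := by ext x; simpa using (he x).2
  have hO : IsOpen {f : V →L[ℝ] V | IsUnit f} := Units.isOpen
  refine ⟨{m' | IsUnit (m' e)} ∩ {m' | IsUnit (m'.flip e)},
    Filter.inter_mem ((hO.preimage hL).mem_nhds ?_) ((hO.preimage hR).mem_nhds ?_), ?_⟩
  · simp [hL1]
  · simp [hR1]
  rintro m' ⟨hl, hr⟩ ha
  have bij : ∀ f : V →L[ℝ] V, IsUnit f → Function.Bijective f := by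
    rintro f ⟨g, rfl⟩
    exact (ContinuousLinearEquiv.unitsEquiv ℝ V g).bijective
  have bl := bij _ hl
  have br := bij _ hr
  obtain ⟨u, hu⟩ := bl.2 e
  obtain ⟨v, hv⟩ := br.2 e
  rw [ContinuousLinearMap.flip_apply] at hv
  have hul : ∀ x, m' u x = x := fun x => bl.1 (by rw [← ha, hu])
  have hvr : ∀ x, m' x v = x := fun x => br.1 (by
    simp only [ContinuousLinearMap.flip_apply]
    rw [ha, hv])
  have huv : u = v := (hvr u).symm.trans (hul v)
  exact ⟨u, fun x => ⟨hul x, huv ▸ hvr x⟩⟩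
end

section
/- (Stability of Lie algebra morphisms.) Let (V,μ) and (W,ν) be finite-dimensional real Lie algebras and f : (V,μ) → (W,ν) a Lie algebra morphism. Regard W as a (V,μ)-module through f, i.e. x·w := ν(f(x), w). Assume H²_CE(V,W) = 0 (equivalently, H²_CE(graph(f), (V⊕W)/graph(f)) = 0); explicitly: every alternating bilinear map c : V × V → W satisfying ν(f(x), c(y,z)) − ν(f(y), c(x,z)) + ν(f(z), c(x,y)) − c(μ(x,y), z) + c(μ(x,z), y) − c(μ(y,z), x) = 0 for all x, y, z ∈ V is of the form c(x,y) = ν(f(x), b(y)) − ν(f(y), b(x)) − b(μ(x,y)) for a linear map b : V → W. Then for every neighborhood N of f in the space of linear maps V → W there exists a neighborhood 𝒰 of the product bracket μ ⊕ ν in the space of bilinear maps (V⊕W) × (V⊕W) → V⊕W such that every Lie algebra structure M ∈ 𝒰 on V ⊕ W admits a linear map f' ∈ N whose graph is a Lie subalgebra of (V⊕W, M). In particular, if M = μ' ⊕ ν' for Lie algebra structures μ' on V and ν' on W, then f' : (V,μ') → (W,ν') is a Lie algebra morphism. -/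
/-!
For a bracket `M` on `V ⊕ W` and a linear map `g : V → W`, let `F (M, g)` be the bilinear map
`(x, y) ↦ w - g v`, where `(v, w) = M ((x, g x), (y, g y))`. The graph of `g` is a subalgebra of
`M` if and only if `F (M, g) = 0`, and `F (μ ⊕ ν, f) = 0`. The derivative of `F` at `(μ ⊕ ν, f)`
in the direction of `g` is the Chevalley–Eilenberg differential `d` from 1- to 2-cochains.

If `M` is a Lie bracket, then `c = F (M, g)` is alternating, and the Jacobi identity for points of
the graph of `g` becomes a relation that is linear in `c` with coefficients continuous in `(M, g)`
(`cocycle_of_jacobi`). At `(μ ⊕ ν, f)` this relation is the 2-cocycle condition, so by the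
vanishing of `H²` its solutions lie in the range of `d`.

The rest is the lemma `exists_zero_of_linear_relation`. Project onto the range of `d` along a
complement `K`. The projected equation is solvable near `(μ ⊕ ν, f)`, since its derivative is
surjective. The solution has `F (M, g) ∈ K`, and the linear relation has no nonzero solution in `K`
at the base point, hence, the unit sphere of `K` being compact, none nearby. So `F (M, g) = 0`.
-/

open Topology

/-- A zero of `F (p, ·)` persists for `p` near `p₀` if the values `F (p, x)` satisfy a closed,
scaling-invariant relation `C` whose solutions at the base point are all directional derivatives
of `F` along `X`. The relation is required only for parameters in `S`. -/
theorem exists_zero_of_linear_relation {P X Y : Type*}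
    [NormedAddCommGroup P] [NormedSpace ℝ P] [CompleteSpace P]
    [NormedAddCommGroup X] [NormedSpace ℝ X] [CompleteSpace X]
    [NormedAddCommGroup Y] [NormedSpace ℝ Y] [FiniteDimensional ℝ Y]
    (F : P × X → Y) (p₀ : P) (x₀ : X)
    (hF : ContDiff ℝ 1 F) (hF0 : F (p₀, x₀) = 0)
    (C : Set ((P × X) × Y)) (hC : IsClosed C)
    (hCsmul : ∀ a y (t : ℝ), (a, y) ∈ C → (a, t • y) ∈ C)
    (hC0 : ∀ y, ((p₀, x₀), y) ∈ C → ∃ b, HasDerivAt (fun t : ℝ => F (p₀, x₀ + t • b)) y 0)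
    (S : Set P) (hS : ∀ p ∈ S, ∀ x, ((p, x), F (p, x)) ∈ C)
    (N : Set X) (hN : N ∈ 𝓝 x₀) :
    ∃ U ∈ 𝓝 p₀, ∀ p ∈ U, p ∈ S → ∃ x ∈ N, F (p, x) = 0 := by
  have hstrict : HasStrictFDerivAt F (fderiv ℝ F (p₀, x₀)) (p₀, x₀) :=
    hF.contDiffAt.hasStrictFDerivAt one_ne_zero
  set F' := fderiv ℝ F (p₀, x₀)
  have hC0' : ∀ y, ((p₀, x₀), y) ∈ C → ∃ b, F' (0, b) = y := by
    intro y hy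
    obtain ⟨b, hb⟩ := hC0 y hy
    have hline : HasDerivAt (fun t : ℝ => (p₀, x₀ + t • b)) (0, b) 0 := by
      refine (hasDerivAt_const _ _).prodMk ?_
      simpa using ((hasDerivAt_id (0 : ℝ)).smul_const b).const_add x₀
    have hcomp : HasDerivAt (fun t : ℝ => F (p₀, x₀ + t • b)) (F' (0, b)) 0 :=
      HasFDerivAt.comp_hasDerivAt (0 : ℝ) (f := fun t : ℝ => (p₀, x₀ + t • b))
        (by simpa using hstrict.hasFDerivAt) hline
    exact ⟨b, hcomp.unique hb⟩
  let A : X →L[ℝ] Y := F'.comp (ContinuousLinearMap.inr ℝ P X)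
  let R : Submodule ℝ Y := LinearMap.range (A : X →ₗ[ℝ] Y)
  obtain ⟨K, hK⟩ := R.exists_isCompl
  let π : Y →L[ℝ] R := LinearMap.toContinuousLinearMap (R.projectionOnto K hK)
  have hπK : ∀ y, π y = 0 → y ∈ K := fun y hy =>
    (Submodule.projectionOnto_apply_eq_zero_iff hK).1 hy
  have hπR : ∀ y : R, π y = y := fun y => Submodule.projectionOnto_apply_left hK y
  -- Near the base point the relation `C` has no solution on the unit sphere of `K`.
  have hsphere : IsCompact ((K : Set Y) ∩ Metric.sphere 0 1) :=
    (isCompact_sphere (0 : Y) 1).inter_left K.closed_of_finiteDimensional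
  have hsub : ({(p₀, x₀)} : Set (P × X)) ×ˢ ((K : Set Y) ∩ Metric.sphere 0 1) ⊆ Cᶜ := by
    rintro ⟨a, y⟩ ⟨ha, hyK, hy1⟩ hmem
    obtain rfl : a = (p₀, x₀) := ha
    obtain ⟨b, hb⟩ := hC0' y hmem
    have hyR : y ∈ R := ⟨b, hb⟩
    have : y = 0 := Submodule.disjoint_def.1 hK.disjoint y hyR hyK
    simp [this] at hy1
  obtain ⟨O, T, hO, -, haO, hT, hOT⟩ :=
    generalized_tube_lemma isCompact_singleton hsphere hC.isOpen_compl hsub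
  have hO' : O ∈ 𝓝 (p₀, x₀) := hO.mem_nhds (haO rfl)
  have hinj : ∀ a ∈ O, ∀ y ∈ K, (a, y) ∈ C → y = 0 := by
    intro a ha y hy hmem
    by_contra hne
    have h1 : ‖y‖⁻¹ • y ∈ (K : Set Y) ∩ Metric.sphere 0 1 :=
      ⟨K.smul_mem _ hy, by simp [norm_smul, hne]⟩
    exact hOT (Set.mk_mem_prod ha (hT h1)) (hCsmul a y _ hmem)
  -- `(p, x) ↦ (p, π (F (p, x)))` is open at the base point, so it attains every `(p, 0)`.
  let G : P × X → P × R := fun a => (a.1, π (F a))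
  have hG : HasStrictFDerivAt G
      ((ContinuousLinearMap.fst ℝ P X).prod (π.comp F')) (p₀, x₀) :=
    hasStrictFDerivAt_fst.prodMk (π.hasStrictFDerivAt.comp _ hstrict)
  have hsurj : ((ContinuousLinearMap.fst ℝ P X).prod (π.comp F')).range = ⊤ := by
    rw [LinearMap.range_eq_top]
    rintro ⟨p, r⟩
    obtain ⟨b, hb⟩ := (r - π (F' (p, 0))).2
    refine ⟨(p, b), ?_⟩
    have h1 : F' (p, b) = F' (p, 0) + F' (0, b) := by rw [← map_add]; simp
    have h2 : F' (0, b) = ((r - π (F' (p, 0)) : R) : Y) := hb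
    simp [h1, h2, hπR, -AddSubgroupClass.coe_sub]
  have hmap := hG.map_nhds_eq_of_surj hsurj
  have hG0 : G (p₀, x₀) = (p₀, 0) := by simp [G, hF0]
  have hgood : O ∩ (Prod.snd ⁻¹' N) ∈ 𝓝 (p₀, x₀) :=
    Filter.inter_mem hO' (continuous_snd.continuousAt.preimage_mem_nhds hN)
  have himg : G '' (O ∩ (Prod.snd ⁻¹' N)) ∈ 𝓝 (p₀, (0 : R)) := by
    rw [← hG0, ← hmap]; exact Filter.image_mem_map hgood
  refine ⟨(fun p => (p, (0 : R))) ⁻¹' (G '' (O ∩ (Prod.snd ⁻¹' N))),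
    ContinuousAt.preimage_mem_nhds (by fun_prop) himg, ?_⟩
  rintro p ⟨⟨q, x⟩, ⟨haO', hxN⟩, hGq⟩ hpS
  obtain ⟨rfl, h0⟩ := Prod.mk.inj hGq
  exact ⟨x, hxN, hinj _ haO' _ (hπK _ h0) (hS _ hpS x)⟩

theorem hasDerivAt_smul_add_sq_smul {E : Type*} [NormedAddCommGroup E] [NormedSpace ℝ E]
    (u v : E) : HasDerivAt (fun t : ℝ => t • u + (t ^ 2) • v) u 0 := by
  have h := ((hasDerivAt_id (0 : ℝ)).smul_const u).add
    ((hasDerivAt_pow 2 (0 : ℝ)).smul_const v)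
  simp only [one_smul, mul_zero, zero_smul, add_zero, Nat.add_one_sub_one, pow_one] at h
  exact h

section graphDefect

variable {V W : Type*} [NormedAddCommGroup V] [NormedSpace ℝ V]
    [NormedAddCommGroup W] [NormedSpace ℝ W]

/-- The map `F` measuring the failure of `graph g` to be a subalgebra of `M`:
the bracket of graph points, followed by the projection `(v, w) ↦ w - g v` with kernel `graph g`.
Written with compositions of continuous linear maps so that smoothness in `(M, g)` is visible. -/
noncomputable def graphDefect
    (a : ((V × W) →L[ℝ] (V × W) →L[ℝ] (V × W)) × (V →L[ℝ] W)) : V →L[ℝ] V →L[ℝ] W :=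
  (ContinuousLinearMap.compL ℝ V (V × W) W
      (ContinuousLinearMap.snd ℝ V W - a.2.comp (ContinuousLinearMap.fst ℝ V W))).comp
    (((ContinuousLinearMap.compL ℝ V (V × W) (V × W)).flip
      (ContinuousLinearMap.inl ℝ V W + (ContinuousLinearMap.inr ℝ V W).comp a.2)).comp
      (a.1.comp (ContinuousLinearMap.inl ℝ V W + (ContinuousLinearMap.inr ℝ V W).comp a.2)))

theorem graphDefect_apply (M : (V × W) →L[ℝ] (V × W) →L[ℝ] (V × W)) (g : V →L[ℝ] W) (x y : V) :
    graphDefect (M, g) x y = (M (x, g x) (y, g y)).2 - g (M (x, g x) (y, g y)).1 := by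
  have h : ∀ v, (ContinuousLinearMap.inl ℝ V W + (ContinuousLinearMap.inr ℝ V W).comp g) v
      = (v, g v) := by
    intro v; ext <;> simp
  change (ContinuousLinearMap.snd ℝ V W - g.comp (ContinuousLinearMap.fst ℝ V W))
    (M ((ContinuousLinearMap.inl ℝ V W + (ContinuousLinearMap.inr ℝ V W).comp g) x)
      ((ContinuousLinearMap.inl ℝ V W + (ContinuousLinearMap.inr ℝ V W).comp g) y)) = _
  rw [h, h]
  rfl

theorem contDiff_graphDefect : ContDiff ℝ 1 (graphDefect (V := V) (W := W)) := by
  unfold graphDefect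
  have hj : ContDiff ℝ 1
      (fun a : ((V × W) →L[ℝ] (V × W) →L[ℝ] (V × W)) × (V →L[ℝ] W) =>
      ContinuousLinearMap.inl ℝ V W + (ContinuousLinearMap.inr ℝ V W).comp a.2) :=
    contDiff_const.add (contDiff_const.clm_comp contDiff_snd)
  refine ContDiff.clm_comp ?_ (ContDiff.clm_comp ?_ (contDiff_fst.clm_comp hj))
  · exact (ContinuousLinearMap.contDiff _).comp
      (contDiff_const.sub (contDiff_snd.clm_comp contDiff_const))
  · exact (ContinuousLinearMap.contDiff _).comp hj

/-- One summand of the linear relation satisfied by the defect, linear in `c`. Its sum over cyclic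
permutations of `(x, y, z)` is the Chevalley–Eilenberg differential of an alternating `c` when `M`
is the product bracket and `g` is a morphism. -/
noncomputable def cyclicTerm (M : (V × W) →L[ℝ] (V × W) →L[ℝ] (V × W)) (g : V →L[ℝ] W)
    (c : V →L[ℝ] V →L[ℝ] W) (x y z : V) : W :=
  c x (M (y, g y) (z, g z)).1 + (M (x, g x) (0, c y z)).2 - g (M (x, g x) (0, c y z)).1

theorem continuous_cyclicTerm (x y z : V) : Continuous
    (fun q : (((V × W) →L[ℝ] (V × W) →L[ℝ] (V × W)) × (V →L[ℝ] W)) × (V →L[ℝ] V →L[ℝ] W) =>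
      cyclicTerm q.1.1 q.1.2 q.2 x y z) := by
  have hM : Continuous (fun q : (((V × W) →L[ℝ] (V × W) →L[ℝ] (V × W)) × (V →L[ℝ] W)) ×
    (V →L[ℝ] V →L[ℝ] W) => q.1.1) := continuous_fst.comp continuous_fst
  have hg : Continuous (fun q : (((V × W) →L[ℝ] (V × W) →L[ℝ] (V × W)) × (V →L[ℝ] W)) ×
    (V →L[ℝ] V →L[ℝ] W) => q.1.2) := continuous_snd.comp continuous_fst
  have hc : Continuous (fun q : (((V × W) →L[ℝ] (V × W) →L[ℝ] (V × W)) × (V →L[ℝ] W)) ×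
    (V →L[ℝ] V →L[ℝ] W) => q.2) := continuous_snd
  have hgr : ∀ v : V, Continuous (fun q : (((V × W) →L[ℝ] (V × W) →L[ℝ] (V × W)) ×
      (V →L[ℝ] W)) × (V →L[ℝ] V →L[ℝ] W) => (v, q.1.2 v)) :=
    fun v => continuous_const.prodMk (hg.clm_apply continuous_const)
  have h1 := (hM.clm_apply (hgr y)).clm_apply (hgr z)
  have h2 := (hM.clm_apply (hgr x)).clm_apply ((continuous_const (y := (0 : V))).prodMk
    ((hc.clm_apply (continuous_const (y := y))).clm_apply (continuous_const (y := z))))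
  exact (((hc.clm_apply continuous_const).clm_apply h1.fst).add h2.snd).sub (hg.clm_apply h2.fst)

theorem isClosed_cocycleRelation : IsClosed
    {q : (((V × W) →L[ℝ] (V × W) →L[ℝ] (V × W)) × (V →L[ℝ] W)) × (V →L[ℝ] V →L[ℝ] W) |
      (∀ x, q.2 x x = 0) ∧ ∀ x y z, cyclicTerm q.1.1 q.1.2 q.2 x y z
      + cyclicTerm q.1.1 q.1.2 q.2 y z x + cyclicTerm q.1.1 q.1.2 q.2 z x y = 0} := by
  simp only [Set.ofPred_and, Set.ofPred_forall]
  refine IsClosed.inter (isClosed_iInter fun x => ?_)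
    (isClosed_iInter fun x => isClosed_iInter fun y => isClosed_iInter fun z => ?_)
  · exact isClosed_eq ((continuous_snd.clm_apply continuous_const).clm_apply continuous_const)
      continuous_const
  · exact isClosed_eq (((continuous_cyclicTerm (W := W) x y z).add (continuous_cyclicTerm (W := W) y z x)).add
      (continuous_cyclicTerm (W := W) z x y)) continuous_const

/-- The Jacobi identity on the graph of `g`, projected along the graph, is a linear relation on
the defect. -/
theorem cocycle_of_jacobi (M : (V × W) →L[ℝ] (V × W) →L[ℝ] (V × W)) (g : V →L[ℝ] W)
    (hjac : ∀ p q r : V × W, M p (M q r) + M q (M r p) + M r (M p q) = 0) (x y z : V) :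
    cyclicTerm M g (graphDefect (M, g)) x y z + cyclicTerm M g (graphDefect (M, g)) y z x
      + cyclicTerm M g (graphDefect (M, g)) z x y = 0 := by
  -- Split `M (y, g y) (z, g z)` into a graph point and its vertical defect.
  have key : ∀ x y z : V, cyclicTerm M g (graphDefect (M, g)) x y z =
      (M (x, g x) (M (y, g y) (z, g z))).2 - g (M (x, g x) (M (y, g y) (z, g z))).1 := by
    intro x y z
    have hsplit : M (y, g y) (z, g z) =
        ((M (y, g y) (z, g z)).1, g (M (y, g y) (z, g z)).1)
          + (0, graphDefect (M, g) y z) := by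
      rw [graphDefect_apply]; ext <;> simp
    conv_rhs => rw [hsplit]
    simp only [map_add, Prod.snd_add, Prod.fst_add]
    rw [cyclicTerm, graphDefect_apply M g x]
    abel
  rw [key, key, key]
  have h := hjac (x, g x) (y, g y) (z, g z)
  have h1 := congrArg Prod.fst h
  have h2 := congrArg Prod.snd h
  simp only [Prod.fst_add, Prod.snd_add, Prod.fst_zero, Prod.snd_zero] at h1 h2
  have h3 := congrArg g h1
  simp only [map_add, map_zero] at h3
  rw [← sub_eq_zero.2 (h2.trans h3.symm)]
  abel

end graphDefect

/-- Stability of Lie algebra morphisms: let `f : (V,μ) → (W,ν)` be a morphism of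
finite-dimensional Lie algebras and suppose `H²_CE(V,W) = 0`, where `W` is a
`(V,μ)`-module through `f`. Then for every neighborhood `N` of `f` there is a
neighborhood `𝒰` of the product bracket `μ ⊕ ν` on `V ⊕ W` such that every Lie algebra
structure `M ∈ 𝒰` admits a linear map `f' ∈ N` whose graph is a Lie subalgebra of
`(V ⊕ W, M)`; in particular, if `M = μ' ⊕ ν'`, then `f' : (V,μ') → (W,ν')` is a
Lie algebra morphism. -/
theorem lie_morphism_stability
    (V W : Type*) [NormedAddCommGroup V] [NormedSpace ℝ V] [FiniteDimensional ℝ V]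
    [NormedAddCommGroup W] [NormedSpace ℝ W] [FiniteDimensional ℝ W]
    (μ : V →L[ℝ] V →L[ℝ] V) (ν : W →L[ℝ] W →L[ℝ] W)
    (hμalt : ∀ x : V, μ x x = 0)
    (hμjac : ∀ x y z : V, μ x (μ y z) + μ y (μ z x) + μ z (μ x y) = 0)
    (hνalt : ∀ u : W, ν u u = 0)
    (hνjac : ∀ u v w : W, ν u (ν v w) + ν v (ν w u) + ν w (ν u v) = 0)
    (f : V →L[ℝ] W) (hf : ∀ x y : V, f (μ x y) = ν (f x) (f y))
    (H2 : ∀ c : V →ₗ[ℝ] V →ₗ[ℝ] W, (∀ x : V, c x x = 0) →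
      (∀ x y z : V, ν (f x) (c y z) - ν (f y) (c x z) + ν (f z) (c x y)
          - c (μ x y) z + c (μ x z) y - c (μ y z) x = 0) →
      ∃ b : V →ₗ[ℝ] W, ∀ x y : V, c x y = ν (f x) (b y) - ν (f y) (b x) - b (μ x y))
    -- `M₀` is the product bracket `μ ⊕ ν` on `V ⊕ W`
    (M₀ : (V × W) →L[ℝ] (V × W) →L[ℝ] (V × W))
    (hM₀ : ∀ p q : V × W, M₀ p q = (μ p.1 q.1, ν p.2 q.2)) :
    ∀ N ∈ nhds f, ∃ 𝒰 ∈ nhds M₀, ∀ M ∈ 𝒰,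
      (∀ p : V × W, M p p = 0) →
      (∀ p q r : V × W, M p (M q r) + M q (M r p) + M r (M p q) = 0) →
      ∃ f' ∈ N,
        (∀ x y : V, (M (x, f' x) (y, f' y)).2 = f' (M (x, f' x) (y, f' y)).1) ∧
        (∀ (μ' : V →L[ℝ] V →L[ℝ] V) (ν' : W →L[ℝ] W →L[ℝ] W),
          (∀ p q : V × W, M p q = (μ' p.1 q.1, ν' p.2 q.2)) →
          ∀ x y : V, f' (μ' x y) = ν' (f' x) (f' y)) := by
  intro N hN
  have hνskew : ∀ u v : W, ν u v = -ν v u := by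
    intro u v
    have h := hνalt (u + v)
    simp only [map_add, add_apply, hνalt, zero_add, add_zero] at h
    exact eq_neg_of_add_eq_zero_right h
  have hμskew : ∀ u v : V, μ u v = -μ v u := by
    intro u v
    have h := hμalt (u + v)
    simp only [map_add, add_apply, hμalt, zero_add, add_zero] at h
    exact eq_neg_of_add_eq_zero_right h
  have hzero : graphDefect (M₀, f) = 0 := by
    ext x y; simp [graphDefect_apply, hM₀, hf]
  have hderiv : ∀ (b : V →L[ℝ] W) (c : V →L[ℝ] V →L[ℝ] W),
      (∀ x y, c x y = ν (f x) (b y) - ν (f y) (b x) - b (μ x y)) →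
      HasDerivAt (fun t : ℝ => graphDefect (M₀, f + t • b)) c 0 := by
    intro b c hc
    -- The defect is quadratic along the line `f + t b`, with linear coefficient `d b = c`.
    have heq : (fun t : ℝ => graphDefect (M₀, f + t • b)) = fun t : ℝ =>
        t • c + (t ^ 2) • ν.bilinearComp b b := by
      funext t
      ext x y
      simp only [graphDefect_apply, hM₀, add_apply, smul_apply, map_add, map_smul, hf, hc,
        ContinuousLinearMap.bilinearComp_apply]
      rw [hνskew (f y) (b x)]
      module
    rw [heq]
    exact hasDerivAt_smul_add_sq_smul c (ν.bilinearComp b b)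
  obtain ⟨U, hU, hUprop⟩ := exists_zero_of_linear_relation
    (graphDefect (V := V) (W := W)) M₀ f contDiff_graphDefect hzero
    {q | (∀ x, q.2 x x = 0) ∧ ∀ x y z, cyclicTerm q.1.1 q.1.2 q.2 x y z
      + cyclicTerm q.1.1 q.1.2 q.2 y z x + cyclicTerm q.1.1 q.1.2 q.2 z x y = 0}
    isClosed_cocycleRelation
    (by
      rintro ⟨M, g⟩ c t ⟨hc1, hc2⟩
      have hlin : ∀ x y z, cyclicTerm M g (t • c) x y z = t • cyclicTerm M g c x y z := by
        intro x y z
        have h0 : ((0 : V), t • c y z) = t • ((0 : V), c y z) := by simp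
        simp only [cyclicTerm, smul_apply, h0, map_smul, Prod.smul_fst,
          Prod.smul_snd, smul_sub, smul_add]
      refine ⟨fun x => ?_, fun x y z => ?_⟩
      · have := hc1 x
        change t • c x x = 0
        rw [show c x x = 0 from this, smul_zero]
      · have := hc2 x y z
        simp only [hlin, ← smul_add] at this ⊢
        rw [this, smul_zero])
    (by
      rintro c ⟨hc1, hc2⟩
      dsimp only at hc1 hc2
      have hcskew : ∀ u v : V, c u v = -c v u := by
        intro u v
        have h := hc1 (u + v)
        simp only [map_add, add_apply, hc1, zero_add, add_zero] at h
        exact eq_neg_of_add_eq_zero_right h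
      obtain ⟨b, hb⟩ := H2 (ContinuousLinearMap.toLinearMap₁₂ c) (fun x => hc1 x) (by
        intro x y z
        have h := hc2 x y z
        simp only [cyclicTerm, hM₀, map_zero, sub_zero] at h
        change ν (f x) (c y z) - ν (f y) (c x z) + ν (f z) (c x y)
          - c (μ x y) z + c (μ x z) y - c (μ y z) x = 0
        rw [hcskew x z, hcskew (μ x y) z, hcskew (μ x z) y, hcskew (μ y z) x, hμskew x z, ← h]
        simp only [map_neg]
        abel)
      exact ⟨LinearMap.toContinuousLinearMap b, hderiv _ _ hb⟩)
    {M | (∀ p, M p p = 0) ∧ ∀ p q r, M p (M q r) + M q (M r p) + M r (M p q) = 0}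
    (by
      rintro M ⟨halt, hjac⟩ g
      exact ⟨fun x => by simp [graphDefect_apply, halt], cocycle_of_jacobi M g hjac⟩)
    N hN
  refine ⟨U, hU, fun M hM halt hjac => ?_⟩
  obtain ⟨f', hf'N, hf'⟩ := hUprop M hM ⟨halt, hjac⟩
  have hgraph : ∀ x y : V, (M (x, f' x) (y, f' y)).2 = f' (M (x, f' x) (y, f' y)).1 := by
    intro x y
    rw [← sub_eq_zero, ← graphDefect_apply, hf']
    rfl
  refine ⟨f', hf'N, hgraph, fun μ' ν' hM' x y => ?_⟩
  simpa [hM'] using (hgraph x y).symm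
end
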